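/- Let f, g: [0,∞) → ℝ be continuous (or locally integrable) functions whose convolution satisfies ∫_0^t f(s) g(t-s) ds = 0 for all t ∈ [0,T]. If moreover g is real-analytic on (0,∞) and there exists T₁ > 0 with g(t) ≠ 0 for all t > T₁, then f = 0 almost everywhere on (0,T). -/

import Mathlib

open MeasureTheory

/-!
The finite Laplace transforms `F`, `G` over `[0, T]` of two functions whose convolution vanishes on
`[0, T]` are entire, bounded on the right half-plane, and satisfy `F z * G z = O (exp (-T * re z))`
there. Hence the means of `log ‖F‖` and `log ‖G‖` over the circle of radius `R` centred at `R` add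
up to at most `-T * R + O(1)`. By Poisson–Jensen and Harnack, a single point `x ≤ R` with
`‖F x‖ ≥ exp (-δ * x)` keeps the mean of `log ‖F‖` above `-2 * δ * R`, and similarly for `G`. So for
`4 * δ < T` one of `F`, `G` decays like `exp (-δ * x)` on the positive axis. If it is `F`, then the
transform over `[0, δ]`, multiplied by `exp (δ * z)`, is bounded by Phragmén–Lindelöf, constant by
Liouville, and zero by Riemann–Lebesgue, so `f` vanishes on `[0, δ]`. Removing the maximal initial
zero intervals of `f` and `g` turns this local statement into Titchmarsh's theorem: those intervals
have total length at least `T`. A nonzero analytic `g` has none, which leaves all of `[0, T]` to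
`f`.
-/

section

open Filter Metric Real Set
open scoped ComplexConjugate FourierTransform Topology

theorem circleIntegrable_poissonKernel_mul {c w : ℂ} {R : ℝ} {u : ℂ → ℝ}
    (hw : w ∈ ball c R) (hu : CircleIntegrable u c R) :
    CircleIntegrable (fun z => poissonKernel c w z * u z) c R := by
  have hcont : Continuous fun θ : ℝ => poissonKernel c w (circleMap c R θ) := by
    unfold poissonKernel
    refine Continuous.div (by fun_prop) (by fun_prop) fun θ => ?_
    have hne : circleMap c R θ - c - (w - c) ≠ 0 := by
      rw [sub_sub_sub_cancel_right, sub_ne_zero]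
      exact circleMap_ne_mem_ball hw θ
    positivity
  exact IntervalIntegrable.continuousOn_mul hu hcont.continuousOn

theorem circleIntegrable_log_norm_of_analyticOnNhd {c : ℂ} {R : ℝ} (hR : 0 < R) {f : ℂ → ℂ}
    (hf : AnalyticOnNhd ℂ f (closedBall c R)) :
    CircleIntegrable (fun z => log ‖f z‖) c R := by
  refine MeromorphicOn.circleIntegrable_log_norm (f := f) fun z hz => (hf z ?_).meromorphicAt
  rw [abs_of_pos hR] at hz
  exact sphere_subset_closedBall hz

theorem eventually_ne_zero_codiscreteWithin_sphere {c w : ℂ} {R : ℝ} {f : ℂ → ℂ}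
    (hf : AnalyticOnNhd ℂ f (closedBall c R)) (hw : w ∈ closedBall c R) (hfw : f w ≠ 0) :
    ∀ᶠ z in codiscreteWithin (sphere c |R|), f z ≠ 0 := by
  have hR : 0 ≤ R := nonempty_closedBall.1 ⟨w, hw⟩
  rw [abs_of_nonneg hR]
  exact Filter.codiscreteWithin_mono sphere_subset_closedBall
    (hf.preimage_zero_mem_codiscreteWithin hfw hw (isConnected_closedBall hR))

/-- The analytic functions on a closed disc that satisfy the Poisson–Jensen inequality at a point
`w` at which they do not vanish. They are closed under products, so the inequality propagates
from linear factors and zero-free functions to everything. -/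
def poissonJensenSubmonoid {c w : ℂ} {R : ℝ} (hw : w ∈ ball c R) : Submonoid (ℂ → ℂ) where
  carrier := {f | AnalyticOnNhd ℂ f (closedBall c R) ∧ f w ≠ 0 ∧
    log ‖f w‖ ≤ circleAverage (fun z => poissonKernel c w z * log ‖f z‖) c R}
  one_mem' := ⟨analyticOnNhd_const, by simp, by simp [circleAverage_def]⟩
  mul_mem' := by
    rintro f g ⟨hf, hfw, hfle⟩ ⟨hg, hgw, hgle⟩
    have hR : 0 < R := pos_of_mem_ball hw
    have hwB := ball_subset_closedBall hw
    have hfint := circleIntegrable_log_norm_of_analyticOnNhd hR hf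
    have hgint := circleIntegrable_log_norm_of_analyticOnNhd hR hg
    refine ⟨hf.mul hg, mul_ne_zero hfw hgw, ?_⟩
    calc log ‖(f * g) w‖ = log ‖f w‖ + log ‖g w‖ := by
          rw [Pi.mul_apply, norm_mul, log_mul (norm_ne_zero_iff.2 hfw) (norm_ne_zero_iff.2 hgw)]
      _ ≤ circleAverage (fun z => poissonKernel c w z * log ‖f z‖) c R
          + circleAverage (fun z => poissonKernel c w z * log ‖g z‖) c R := add_le_add hfle hgle
      _ = circleAverage (fun z => poissonKernel c w z * log ‖(f * g) z‖) c R := by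
          rw [← circleAverage_fun_add (circleIntegrable_poissonKernel_mul hw hfint)
            (circleIntegrable_poissonKernel_mul hw hgint)]
          refine circleAverage_congr_codiscreteWithin ?_ hR.ne'
          filter_upwards [eventually_ne_zero_codiscreteWithin_sphere hf hwB hfw,
            eventually_ne_zero_codiscreteWithin_sphere hg hwB hgw] with z hfz hgz
          rw [Pi.mul_apply, norm_mul, log_mul (norm_ne_zero_iff.2 hfz) (norm_ne_zero_iff.2 hgz),
            mul_add]

theorem mem_poissonJensenSubmonoid_of_forall_ne_zero {c w : ℂ} {R : ℝ} (hw : w ∈ ball c R)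
    {f : ℂ → ℂ} (hf : AnalyticOnNhd ℂ f (closedBall c R)) (hf0 : ∀ z ∈ closedBall c R, f z ≠ 0) :
    f ∈ poissonJensenSubmonoid hw := by
  have hharm : InnerProductSpace.HarmonicOnNhd (fun z => log ‖f z‖) (closedBall c R) :=
    fun z hz => (hf z hz).harmonicAt_log_norm (hf0 z hz)
  exact ⟨hf, hf0 w (ball_subset_closedBall hw), (hharm.circleAverage_poissonKernel_smul hw).ge⟩

theorem norm_sq_sub_conj_mul_div (a b : ℂ) {R : ℝ} (hR : R ≠ 0) :
    ‖(R ^ 2 - conj a * b) / R‖ ^ 2 =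
      ‖b - a‖ ^ 2 + (R ^ 2 - ‖a‖ ^ 2) * (R ^ 2 - ‖b‖ ^ 2) / R ^ 2 := by
  rw [norm_div, div_pow, Complex.norm_real, norm_eq_abs, sq_abs]
  field_simp
  simp only [← Complex.normSq_eq_norm_sq, Complex.normSq_apply, Complex.sub_re, Complex.sub_im,
    Complex.mul_re, Complex.mul_im, Complex.conj_re, Complex.conj_im, ← Complex.ofReal_pow,
    Complex.ofReal_re, Complex.ofReal_im]
  ring

theorem sub_mem_poissonJensenSubmonoid {c w u : ℂ} {R : ℝ} (hw : w ∈ ball c R)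
    (hu : u ∈ closedBall c R) (hwu : w ≠ u) :
    (fun z => z - u) ∈ poissonJensenSubmonoid hw := by
  have hR : 0 < R := pos_of_mem_ball hw
  refine ⟨analyticOnNhd_id.sub analyticOnNhd_const, sub_ne_zero.2 hwu, ?_⟩
  rcases eq_or_lt_of_le (mem_closedBall.1 hu) with hu | hu
  · rw [← circleAverage_re_herglotzRieszKernel_mul_log (mem_sphere.2 hu) hw,
      ← poissonKernel_eq_re_herglotzRieszKernel]
    rfl
  -- `q` moves the zero of `z - u` to its mirror image outside the disc.
  let q : ℂ → ℂ := fun z => (R ^ 2 - conj (u - c) * (z - c)) / R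
  have hq (z : ℂ) :
      ‖q z‖ ^ 2 = ‖z - u‖ ^ 2 + (R ^ 2 - dist u c ^ 2) * (R ^ 2 - dist z c ^ 2) / R ^ 2 := by
    have hsq := norm_sq_sub_conj_mul_div (u - c) (z - c) hR.ne'
    rwa [sub_sub_sub_cancel_right, ← dist_eq_norm u c, ← dist_eq_norm z c] at hsq
  have hu_pos : 0 < R ^ 2 - dist u c ^ 2 := by nlinarith [dist_nonneg (x := u) (y := c)]
  have hq_sphere {z : ℂ} (hz : z ∈ sphere c |R|) : ‖q z‖ = ‖z - u‖ := by
    rw [abs_of_pos hR, mem_sphere] at hz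
    rw [← sq_eq_sq₀ (norm_nonneg _) (norm_nonneg _), hq z, hz]
    simp
  have hq_ge {z : ℂ} (hz : z ∈ closedBall c R) : ‖z - u‖ ≤ ‖q z‖ := by
    have hz : 0 ≤ R ^ 2 - dist z c ^ 2 := sub_nonneg.2 (by gcongr; exact mem_closedBall.1 hz)
    rw [← sq_le_sq₀ (norm_nonneg _) (norm_nonneg _), hq z]
    exact le_add_of_nonneg_right (by positivity)
  have hq_ne {z : ℂ} (hz : z ∈ closedBall c R) : q z ≠ 0 := by
    rcases eq_or_ne z u with rfl | hzu
    · rw [← norm_ne_zero_iff, ← sq_pos_iff, hq z]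
      positivity
    · exact norm_pos_iff.1 ((norm_pos_iff.2 (sub_ne_zero.2 hzu)).trans_le (hq_ge hz))
  have hq_mem : q ∈ poissonJensenSubmonoid hw :=
    mem_poissonJensenSubmonoid_of_forall_ne_zero hw (fun z _ => by fun_prop) fun _ => hq_ne
  calc log ‖w - u‖ ≤ log ‖q w‖ :=
        log_le_log (norm_pos_iff.2 (sub_ne_zero.2 hwu)) (hq_ge (ball_subset_closedBall hw))
    _ ≤ circleAverage (fun z => poissonKernel c w z * log ‖q z‖) c R := hq_mem.2.2
    _ = circleAverage (fun z => poissonKernel c w z * log ‖z - u‖) c R :=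
        circleAverage_congr_sphere fun z hz => by simp only [hq_sphere hz]

theorem exists_eqOn_prod_sub_pow_mul {c w : ℂ} {R : ℝ} {f : ℂ → ℂ}
    (hf : AnalyticOnNhd ℂ f (closedBall c R)) (hw : w ∈ ball c R) (hfw : f w ≠ 0) :
    ∃ (S : Finset ℂ) (n : ℂ → ℕ) (g : ℂ → ℂ), ↑S ⊆ closedBall c R ∧
      AnalyticOnNhd ℂ g (closedBall c R) ∧ (∀ z ∈ closedBall c R, g z ≠ 0) ∧
      EqOn f ((∏ u ∈ S, (fun z => z - u) ^ n u) * g) (closedBall c R) := by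
  have hwB := ball_subset_closedBall hw
  have hconn : IsConnected (closedBall c R) := isConnected_closedBall (pos_of_mem_ball hw).le
  set D := MeromorphicOn.divisor f (closedBall c R)
  have hfin : D.support.Finite := D.finiteSupport (isCompact_closedBall c R)
  have horder : ∀ u : closedBall c R, meromorphicOrderAt f u ≠ ⊤ := by
    rw [← hf.meromorphicOn.exists_meromorphicOrderAt_ne_top_iff_forall hconn]
    refine ⟨⟨w, hwB⟩, ?_⟩
    simp [(hf w hwB).meromorphicNFAt.meromorphicOrderAt_eq_zero_iff.2 hfw]
  obtain ⟨g, hg, hg0, hfg⟩ := hf.meromorphicOn.extract_zeros_poles horder hfin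
  have hprod : ∏ᶠ u, (fun z : ℂ => z - u) ^ D u
      = ∏ u ∈ hfin.toFinset, (fun z => z - u) ^ (D u).toNat := by
    rw [finprod_eq_prod_of_mulSupport_subset (s := hfin.toFinset) _ fun u hu => ?_]
    · refine Finset.prod_congr rfl fun u _ => ?_
      rw [← zpow_natCast, Int.toNat_of_nonneg (MeromorphicOn.AnalyticOnNhd.divisor_nonneg hf u)]
    · contrapose! hu
      simp_all
  rw [hprod] at hfg
  refine ⟨hfin.toFinset, fun u => (D u).toNat, g, by simpa using D.supportWithinDomain, hg,
    fun z hz => hg0 ⟨z, hz⟩, ?_⟩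
  refine hf.eqOn_of_preconnected_of_frequently_eq ?_ hconn.isPreconnected hwB ?_
  · refine AnalyticOnNhd.mul (fun z _ => ?_) hg
    fun_prop
  · refine Eventually.frequently ?_
    filter_upwards [mem_codiscreteWithin_iff_forall_mem_nhdsNE.1 hfg w hwB,
      nhdsWithin_le_nhds (closedBall_mem_nhds_of_mem hw)] with z hz hzB
    exact hz.resolve_right (not_not_intro hzB)

theorem log_norm_le_circleAverage_poissonKernel {c w : ℂ} {R : ℝ} {f : ℂ → ℂ}
    (hf : AnalyticOnNhd ℂ f (closedBall c R)) (hw : w ∈ ball c R) (hfw : f w ≠ 0) :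
    log ‖f w‖ ≤ circleAverage (fun z => poissonKernel c w z * log ‖f z‖) c R := by
  have hwB := ball_subset_closedBall hw
  have hR : 0 < R := pos_of_mem_ball hw
  obtain ⟨S, n, g, hS, hg, hg0, hfg⟩ := exists_eqOn_prod_sub_pow_mul hf hw hfw
  have hmem : (∏ u ∈ S, (fun z => z - u) ^ n u) * g ∈ poissonJensenSubmonoid hw := by
    refine mul_mem (Submonoid.prod_mem _ fun u hu => ?_)
      (mem_poissonJensenSubmonoid_of_forall_ne_zero hw hg hg0)
    rcases eq_or_ne (n u) 0 with hn | hn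
    · simp [hn]
    · refine pow_mem (sub_mem_poissonJensenSubmonoid hw (hS hu) ?_) _
      rintro rfl
      refine hfw ?_
      rw [hfg hwB, Pi.mul_apply, Finset.prod_apply, Finset.prod_eq_zero hu (by simp [hn]), zero_mul]
  rw [hfg hwB]
  refine hmem.2.2.trans_eq (circleAverage_congr_sphere fun z hz => ?_)
  rw [abs_of_pos hR] at hz
  simp only [hfg (sphere_subset_closedBall hz)]

theorem log_norm_le_mul_circleAverage_log_norm {c w : ℂ} {R : ℝ} {f : ℂ → ℂ}
    (hf : AnalyticOnNhd ℂ f (closedBall c R)) (hw : w ∈ ball c R) (hfw : f w ≠ 0)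
    (hf1 : ∀ z ∈ sphere c R, ‖f z‖ ≤ 1) :
    log ‖f w‖ ≤ (R - ‖w - c‖) / (R + ‖w - c‖) * circleAverage (fun z => log ‖f z‖) c R := by
  have hR : 0 < R := pos_of_mem_ball hw
  have hint := circleIntegrable_log_norm_of_analyticOnNhd hR hf
  calc log ‖f w‖ ≤ circleAverage (fun z => poissonKernel c w z * log ‖f z‖) c R :=
        log_norm_le_circleAverage_poissonKernel hf hw hfw
    _ ≤ circleAverage (fun z => ((R - ‖w - c‖) / (R + ‖w - c‖)) • log ‖f z‖) c R := by
        refine circleAverage_mono (circleIntegrable_poissonKernel_mul hw hint)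
          hint.const_smul fun z hz => ?_
        rw [abs_of_pos hR] at hz
        refine mul_le_mul_of_nonpos_right ?_ (log_nonpos (norm_nonneg _) (hf1 z hz))
        rw [poissonKernel_eq_re_herglotzRieszKernel]
        exact le_re_herglotzRieszKernel hz hw
    _ = (R - ‖w - c‖) / (R + ‖w - c‖) * circleAverage (fun z => log ‖f z‖) c R :=
        circleAverage_fun_smul

theorem re_nonneg_of_mem_closedBall_self {R : ℝ} {z : ℂ} (hz : z ∈ closedBall (R : ℂ) R) :
    0 ≤ z.re := by
  have h := (Complex.abs_re_le_norm (z - R)).trans (mem_closedBall_iff_norm.1 hz)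
  rw [Complex.sub_re, Complex.ofReal_re, abs_le] at h
  linarith

theorem neg_le_circleAverage_log_norm {F : ℂ → ℂ} (hF : Differentiable ℂ F)
    (hF1 : ∀ z : ℂ, 0 ≤ z.re → ‖F z‖ ≤ 1) {ε x R : ℝ} (hε : 0 ≤ ε) (hx : 0 < x) (hxR : x ≤ R)
    (hFx : exp (-(ε * x)) ≤ ‖F x‖) :
    -(2 * ε * R) ≤ circleAverage (fun z => log ‖F z‖) R R := by
  have hnorm : ‖(x : ℂ) - R‖ = R - x := by
    rw [← Complex.ofReal_sub, Complex.norm_real, norm_eq_abs, abs_of_nonpos (by linarith), neg_sub]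
  have hle : -(ε * x) ≤ x / (2 * R - x) * circleAverage (fun z => log ‖F z‖) R R := by
    have h := log_norm_le_mul_circleAverage_log_norm (R := R) (c := R) (w := x)
      (fun z _ => hF.analyticAt z) (by rw [mem_ball_iff_norm, hnorm]; linarith)
      (norm_pos_iff.1 ((exp_pos _).trans_le hFx))
      fun z hz => hF1 z (re_nonneg_of_mem_closedBall_self (sphere_subset_closedBall hz))
    rw [hnorm, sub_sub_cancel, show R + (R - x) = 2 * R - x by ring] at h
    exact ((le_log_iff_exp_le ((exp_pos _).trans_le hFx)).2 hFx).trans h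
  rw [div_mul_eq_mul_div, le_div_iff₀ (by linarith)] at hle
  have havg : -(ε * (2 * R - x)) ≤ circleAverage (fun z => log ‖F z‖) R R :=
    le_of_mul_le_mul_left (by linarith) hx
  linarith [mul_nonneg hε hx.le]

theorem circleAverage_log_norm_add_le {c : ℂ} {R : ℝ} (hR : 0 < R) {F G H : ℂ → ℂ}
    (hF : AnalyticOnNhd ℂ F (closedBall c R)) (hG : AnalyticOnNhd ℂ G (closedBall c R))
    (hH : AnalyticOnNhd ℂ H (closedBall c R)) (hF0 : ∃ w ∈ closedBall c R, F w ≠ 0)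
    (hG0 : ∃ w ∈ closedBall c R, G w ≠ 0) (hH0 : ∀ z ∈ closedBall c R, H z ≠ 0)
    (hFG : ∀ z ∈ sphere c R, ‖F z * G z‖ ≤ ‖H z‖) :
    circleAverage (fun z => log ‖F z‖) c R + circleAverage (fun z => log ‖G z‖) c R
      ≤ log ‖H c‖ := by
  obtain ⟨u, hu, hFu⟩ := hF0
  obtain ⟨v, hv, hGv⟩ := hG0
  have hFint := circleIntegrable_log_norm_of_analyticOnNhd hR hF
  have hGint := circleIntegrable_log_norm_of_analyticOnNhd hR hG
  have hHint := circleIntegrable_log_norm_of_analyticOnNhd hR hH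
  have hHavg : circleAverage (fun z => log ‖H z‖) c R = log ‖H c‖ :=
    AnalyticOnNhd.circleAverage_log_norm_of_ne_zero (by rwa [abs_of_pos hR])
      (by rwa [abs_of_pos hR])
  rw [← sub_nonpos, ← hHavg]
  calc circleAverage (fun z => log ‖F z‖) c R + circleAverage (fun z => log ‖G z‖) c R
        - circleAverage (fun z => log ‖H z‖) c R
      = circleAverage (fun z => log ‖F z‖ + log ‖G z‖ - log ‖H z‖) c R := by
        rw [circleAverage_fun_sub (f₁ := fun z => log ‖F z‖ + log ‖G z‖) (hFint.add hGint) hHint,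
          circleAverage_fun_add hFint hGint]
    _ = circleAverage (fun z => log ‖F z * G z / H z‖) c R := by
        refine circleAverage_congr_codiscreteWithin ?_ hR.ne'
        filter_upwards [eventually_ne_zero_codiscreteWithin_sphere hF hu hFu,
          eventually_ne_zero_codiscreteWithin_sphere hG hv hGv,
          self_mem_codiscreteWithin _] with z hFz hGz hz
        rw [abs_of_pos hR] at hz
        have hHz := hH0 z (sphere_subset_closedBall hz)
        rw [norm_div, norm_mul, log_div (by positivity) (by positivity),
          log_mul (by positivity) (by positivity)]
    _ ≤ 0 := by
        refine circleAverage_mono_on_of_le_circle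
          (circleIntegrable_log_norm_of_analyticOnNhd hR ((hF.mul hG).div hH hH0)) fun z hz => ?_
        rw [abs_of_pos hR] at hz
        rw [norm_div]
        exact log_nonpos (by positivity) (div_le_one_of_le₀ (hFG z hz) (norm_nonneg _))

theorem eventually_norm_le_exp_or_of_norm_mul_le {F G : ℂ → ℂ} (hF : Differentiable ℂ F)
    (hG : Differentiable ℂ G) (hF1 : ∀ z : ℂ, 0 ≤ z.re → ‖F z‖ ≤ 1)
    (hG1 : ∀ z : ℂ, 0 ≤ z.re → ‖G z‖ ≤ 1) {C T ε : ℝ} (hC : 0 < C) (hε : 0 ≤ ε) (hεT : 4 * ε < T)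
    (hFG : ∀ z : ℂ, 0 ≤ z.re → ‖F z * G z‖ ≤ C * exp (-(T * z.re))) :
    (∀ᶠ x : ℝ in atTop, ‖F x‖ ≤ exp (-(ε * x))) ∨ (∀ᶠ x : ℝ in atTop, ‖G x‖ ≤ exp (-(ε * x))) := by
  by_contra! ⟨hF', hG'⟩
  obtain ⟨x, hFx, hx⟩ := (hF'.and_eventually (eventually_gt_atTop 0)).exists
  obtain ⟨y, hGy, hy⟩ := (hG'.and_eventually (eventually_gt_atTop 0)).exists
  obtain ⟨R, hCR, hxR, hyR⟩ : ∃ R, log C < (T - 4 * ε) * R ∧ x ≤ R ∧ y ≤ R :=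
    (((tendsto_id.const_mul_atTop (sub_pos.2 hεT)).eventually_gt_atTop _).and
      ((eventually_ge_atTop x).and (eventually_ge_atTop y))).exists
  have hR : 0 < R := hx.trans_le hxR
  have hmem {t : ℝ} (ht : 0 < t) (htR : t ≤ R) : (t : ℂ) ∈ closedBall (R : ℂ) R := by
    rw [mem_closedBall, Complex.dist_of_im_eq (by simp), Complex.ofReal_re, Complex.ofReal_re,
      dist_eq, abs_le]
    constructor <;> linarith
  have hnormH (z : ℂ) : ‖C * Complex.exp (-(T * z))‖ = C * exp (-(T * z.re)) := by
    simp [Complex.norm_exp, abs_of_pos hC]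
  have hle := circleAverage_log_norm_add_le (H := fun z => C * Complex.exp (-(T * z))) hR
    (fun z _ => hF.analyticAt z) (fun z _ => hG.analyticAt z) (fun z _ => by fun_prop)
    ⟨x, hmem hx hxR, norm_pos_iff.1 ((exp_pos _).trans hFx)⟩
    ⟨y, hmem hy hyR, norm_pos_iff.1 ((exp_pos _).trans hGy)⟩
    (fun z _ => by simp [hC.ne'])
    fun z hz => (hFG z (re_nonneg_of_mem_closedBall_self (sphere_subset_closedBall hz))).trans_eq
      (hnormH z).symm
  rw [hnormH, log_mul hC.ne' (exp_ne_zero _), log_exp, Complex.ofReal_re] at hle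
  have hFavg := neg_le_circleAverage_log_norm hF hF1 hε hx hxR hFx.le
  have hGavg := neg_le_circleAverage_log_norm hG hG1 hε hy hyR hGy.le
  linarith

/-- The Laplace transform of `f` restricted to the interval from `a` to `b`. It is entire in `z`,
which the transform over an unbounded interval need not be. -/
noncomputable def finiteLaplace (f : ℝ → ℂ) (a b : ℝ) (z : ℂ) : ℂ :=
  ∫ s in a..b, Complex.exp (-z * s) * f s

theorem intervalIntegrable_exp_mul {f : ℝ → ℂ} {a b : ℝ} (hf : IntervalIntegrable f volume a b)
    (z : ℂ) : IntervalIntegrable (fun s : ℝ => Complex.exp (-z * s) * f s) volume a b :=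
  hf.continuousOn_mul (by fun_prop)

theorem finiteLaplace_add_adjacent {f : ℝ → ℂ} {a b c : ℝ} (hab : IntervalIntegrable f volume a b)
    (hbc : IntervalIntegrable f volume b c) (z : ℂ) :
    finiteLaplace f a b z + finiteLaplace f b c z = finiteLaplace f a c z :=
  intervalIntegral.integral_add_adjacent_intervals (intervalIntegrable_exp_mul hab z)
    (intervalIntegrable_exp_mul hbc z)

theorem norm_finiteLaplace_le {f : ℝ → ℂ} {a b : ℝ} (hab : a ≤ b)
    (hf : IntervalIntegrable f volume a b) {z : ℂ} {m : ℝ} (hm : ∀ s ∈ Icc a b, -(z.re * s) ≤ m) :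
    ‖finiteLaplace f a b z‖ ≤ exp m * ∫ s in a..b, ‖f s‖ := by
  rw [← intervalIntegral.integral_const_mul]
  refine intervalIntegral.norm_integral_le_of_norm_le hab (ae_of_all _ fun s hs => ?_)
    (hf.norm.const_mul _)
  rw [norm_mul, Complex.norm_exp]
  gcongr
  simpa using hm s (Ioc_subset_Icc_self hs)

theorem norm_finiteLaplace_le_of_re_nonneg {f : ℝ → ℂ} {a b : ℝ} (hab : a ≤ b)
    (hf : IntervalIntegrable f volume a b) {z : ℂ} (hz : 0 ≤ z.re) :
    ‖finiteLaplace f a b z‖ ≤ exp (-(z.re * a)) * ∫ s in a..b, ‖f s‖ :=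
  norm_finiteLaplace_le hab hf fun _ hs => neg_le_neg (mul_le_mul_of_nonneg_left hs.1 hz)

theorem norm_finiteLaplace_le_of_re_nonpos {f : ℝ → ℂ} {a b : ℝ} (hab : a ≤ b)
    (hf : IntervalIntegrable f volume a b) {z : ℂ} (hz : z.re ≤ 0) :
    ‖finiteLaplace f a b z‖ ≤ exp (-(z.re * b)) * ∫ s in a..b, ‖f s‖ :=
  norm_finiteLaplace_le hab hf fun _ hs => neg_le_neg (mul_le_mul_of_nonpos_left hs.2 hz)

theorem differentiable_finiteLaplace {f : ℝ → ℂ} {a b : ℝ} (hf : IntervalIntegrable f volume a b) :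
    Differentiable ℂ (finiteLaplace f a b) := by
  intro z
  obtain ⟨M, hM⟩ := ((isCompact_closedBall z 1).prod (isCompact_uIcc (a := a) (b := b))
    ).exists_bound_of_continuousOn (f := fun p : ℂ × ℝ => -p.2 * Complex.exp (-p.1 * p.2))
    (by fun_prop)
  refine (intervalIntegral.hasDerivAt_integral_of_dominated_loc_of_deriv_le
    (F' := fun z s => -s * Complex.exp (-z * s) * f s) (bound := fun s => M * ‖f s‖)
    (ball_mem_nhds z one_pos) ?_ (intervalIntegrable_exp_mul hf z) ?_ ?_
    (hf.norm.const_mul M) ?_).2.differentiableAt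
  · exact Eventually.of_forall fun w => (intervalIntegrable_exp_mul hf w).def'.aestronglyMeasurable
  · exact (hf.continuousOn_mul (by fun_prop)).def'.aestronglyMeasurable
  · refine ae_of_all _ fun s hs w hw => ?_
    rw [norm_mul]
    gcongr
    exact hM (w, s) ⟨ball_subset_closedBall hw, uIoc_subset_uIcc hs⟩
  · refine ae_of_all _ fun s _ w _ => ?_
    have hexp : HasDerivAt (fun w : ℂ => -w * s) (-s) w := by
      simpa using (hasDerivAt_neg w).mul_const (s : ℂ)
    exact (hexp.cexp.mul_const (f s)).congr_deriv (by ring)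

theorem integrableOn_Ioi_indicator_Iic {f : ℝ → ℂ} {a b : ℝ}
    (hf : IntervalIntegrable f volume a b) :
    IntegrableOn ((Iic b).indicator f) (Ioi a) := by
  rw [IntegrableOn, integrable_indicator_iff measurableSet_Iic, IntegrableOn,
    Measure.restrict_restrict measurableSet_Iic, Iic_inter_Ioi]
  exact hf.1

theorem finiteLaplace_eq_integral_Ioi {a b : ℝ} (hab : a ≤ b) (f : ℝ → ℂ) (z : ℂ) :
    finiteLaplace f a b z =
      ∫ s in Ioi a, (Iic b).indicator (fun s : ℝ => Complex.exp (-z * s) * f s) s := by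
  rw [integral_indicator measurableSet_Iic, Measure.restrict_restrict measurableSet_Iic,
    Iic_inter_Ioi, finiteLaplace, intervalIntegral.integral_of_le hab]

theorem finiteLaplace_mul {f g : ℝ → ℂ} {T : ℝ} (hT : 0 ≤ T)
    (hf : IntervalIntegrable f volume 0 T) (hg : IntervalIntegrable g volume 0 T) (z : ℂ) :
    finiteLaplace f 0 T z * finiteLaplace g 0 T z =
      ∫ x in Ioi (0 : ℝ), Complex.exp (-z * x) *
        ∫ t in (0 : ℝ)..x, (Iic T).indicator f t * (Iic T).indicator g (x - t) := by
  rw [finiteLaplace_eq_integral_Ioi hT, finiteLaplace_eq_integral_Ioi hT,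
    ← ContinuousLinearMap.mul_apply' ℝ,
    ← integral_posConvolution (integrableOn_Ioi_indicator_Iic (intervalIntegrable_exp_mul hf z))
      (integrableOn_Ioi_indicator_Iic (intervalIntegrable_exp_mul hg z))]
  refine integral_congr_ae (ae_of_all _ fun x => ?_)
  simp only [← intervalIntegral.integral_const_mul]
  refine intervalIntegral.integral_congr fun t _ => ?_
  have hexp : Complex.exp (-z * x) = Complex.exp (-z * t) * Complex.exp (-z * (x - t : ℝ)) := by
    rw [← Complex.exp_add]
    push_cast
    ring_nf
  rw [ContinuousLinearMap.mul_apply', hexp,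
    indicator_mul_right (Iic T) (fun s : ℝ => Complex.exp (-z * s)),
    indicator_mul_right (Iic T) (fun s : ℝ => Complex.exp (-z * s))]
  ring

theorem exists_norm_finiteLaplace_mul_le {f g : ℝ → ℂ} {T : ℝ} (hT : 0 ≤ T)
    (hf : IntervalIntegrable f volume 0 T) (hg : IntervalIntegrable g volume 0 T)
    (hfg : ∀ t ∈ Icc 0 T, ∫ s in (0 : ℝ)..t, f s * g (t - s) = 0) :
    ∃ C, 0 < C ∧ ∀ z : ℂ, 0 ≤ z.re →
      ‖finiteLaplace f 0 T z * finiteLaplace g 0 T z‖ ≤ C * exp (-(T * z.re)) := by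
  let k : ℝ → ℂ := fun x =>
    ∫ t in (0 : ℝ)..x, (Iic T).indicator f t * (Iic T).indicator g (x - t)
  have hk : IntegrableOn k (Ioi 0) :=
    (integrable_indicator_iff measurableSet_Ioi).1 <|
      integrable_posConvolution (integrableOn_Ioi_indicator_Iic hf)
        (integrableOn_Ioi_indicator_Iic hg) (ContinuousLinearMap.mul ℝ ℂ)
  have hk0 {x : ℝ} (hx : 0 < x) (hxT : x ≤ T) : k x = 0 := by
    rw [← hfg x ⟨hx.le, hxT⟩]
    refine intervalIntegral.integral_congr fun s hs => ?_
    rw [uIcc_of_le hx.le] at hs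
    simp only [indicator_of_mem (show s ∈ Iic T from hs.2.trans hxT),
      indicator_of_mem (show x - s ∈ Iic T from (sub_le_self _ hs.1).trans hxT)]
  refine ⟨(∫ x in Ioi (0 : ℝ), ‖k x‖) + 1, by positivity, fun z hz => ?_⟩
  rw [finiteLaplace_mul hT hf hg]
  calc ‖∫ x in Ioi (0 : ℝ), Complex.exp (-z * x) * k x‖
      ≤ ∫ x in Ioi (0 : ℝ), ‖k x‖ * exp (-(T * z.re)) := by
        refine norm_integral_le_of_norm_le (hk.norm.mul_const _) ?_
        filter_upwards [ae_restrict_mem measurableSet_Ioi] with x hx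
        rcases le_or_gt x T with hxT | hxT
        · simp [hk0 hx hxT]
        · rw [norm_mul, mul_comm, Complex.norm_exp]
          gcongr
          simpa [mul_comm] using mul_le_mul_of_nonneg_left hxT.le hz
    _ ≤ ((∫ x in Ioi (0 : ℝ), ‖k x‖) + 1) * exp (-(T * z.re)) := by
        rw [integral_mul_const]
        gcongr
        exact le_add_of_nonneg_right zero_le_one

theorem norm_exp_mul_finiteLaplace_le_of_re_nonpos {f : ℝ → ℂ} {δ : ℝ} (hδ : 0 ≤ δ)
    (hf : IntervalIntegrable f volume 0 δ) {z : ℂ} (hz : z.re ≤ 0) :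
    ‖Complex.exp (δ * z) * finiteLaplace f 0 δ z‖ ≤ ∫ s in (0 : ℝ)..δ, ‖f s‖ := by
  rw [norm_mul, Complex.norm_exp, Complex.re_ofReal_mul]
  calc exp (δ * z.re) * ‖finiteLaplace f 0 δ z‖
      ≤ exp (δ * z.re) * (exp (-(z.re * δ)) * ∫ s in (0 : ℝ)..δ, ‖f s‖) := by
        gcongr
        exact norm_finiteLaplace_le_of_re_nonpos hδ hf hz
    _ = ∫ s in (0 : ℝ)..δ, ‖f s‖ := by
        rw [← mul_assoc, ← exp_add, mul_comm z.re, add_neg_cancel, exp_zero, one_mul]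

theorem exp_mul_finiteLaplace_isBigO {f : ℝ → ℂ} {δ : ℝ} (hδ : 0 ≤ δ)
    (hf : IntervalIntegrable f volume 0 δ) :
    (fun z : ℂ => Complex.exp (δ * z) * finiteLaplace f 0 δ z)
      =O[𝓟 {z | 0 < z.re}] fun z => exp (δ * ‖z‖) := by
  refine Asymptotics.IsBigO.of_bound (∫ s in (0 : ℝ)..δ, ‖f s‖)
    (eventually_principal.2 fun z (hz : 0 < z.re) => ?_)
  rw [norm_mul, Complex.norm_exp, Complex.re_ofReal_mul, norm_of_nonneg (exp_pos _).le, mul_comm]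
  gcongr
  · exact intervalIntegral.integral_nonneg hδ fun _ _ => norm_nonneg _
  · simpa using norm_finiteLaplace_le_of_re_nonneg hδ hf hz.le
  · exact Complex.re_le_norm z

theorem exp_mul_finiteLaplace_eq_of_isBoundedUnder {f : ℝ → ℂ} {δ : ℝ} (hδ : 0 ≤ δ)
    (hf : IntervalIntegrable f volume 0 δ)
    (hbdd : IsBoundedUnder (· ≤ ·) atTop fun x : ℝ => ‖Complex.exp (δ * x) * finiteLaplace f 0 δ x‖)
    (z w : ℂ) :
    Complex.exp (δ * z) * finiteLaplace f 0 δ z = Complex.exp (δ * w) * finiteLaplace f 0 δ w := by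
  have hdiff : Differentiable ℂ fun z : ℂ => Complex.exp (δ * z) * finiteLaplace f 0 δ z :=
    Differentiable.mul (by fun_prop) (differentiable_finiteLaplace hf)
  refine hdiff.apply_eq_apply_of_bounded (isBounded_iff_forall_norm_le.2
    ⟨∫ s in (0 : ℝ)..δ, ‖f s‖, forall_mem_range.2 fun z => ?_⟩) z w
  rcases le_total z.re 0 with hz | hz
  · exact norm_exp_mul_finiteLaplace_le_of_re_nonpos hδ hf hz
  · refine PhragmenLindelof.right_half_plane_of_bounded_on_real
      (f := fun z : ℂ => Complex.exp (δ * z) * finiteLaplace f 0 δ z) hdiff.diffContOnCl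
      ⟨1, one_lt_two, δ, ?_⟩ hbdd (fun x => ?_) hz
    · simpa only [rpow_one] using (exp_mul_finiteLaplace_isBigO hδ hf).mono inf_le_right
    · exact norm_exp_mul_finiteLaplace_le_of_re_nonpos hδ hf (by simp)

theorem fourier_indicator_Ioc {a b : ℝ} (hab : a ≤ b) (f : ℝ → ℂ) (ξ : ℝ) :
    𝓕 ((Ioc a b).indicator f) ξ = finiteLaplace f a b (2 * π * ξ * Complex.I) := by
  rw [fourier_real_eq_integral_exp_smul, finiteLaplace, intervalIntegral.integral_of_le hab,
    ← integral_indicator measurableSet_Ioc]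
  congr! 2
  simp only [indicator_apply, smul_eq_mul]
  split_ifs
  · push_cast; ring_nf
  · simp

theorem eqOn_zero_of_isBoundedUnder_exp_mul_finiteLaplace {f : ℝ → ℂ} (hf : Continuous f) {δ : ℝ}
    (hδ : 0 ≤ δ) (hbdd : IsBoundedUnder (· ≤ ·) atTop fun x : ℝ =>
      ‖Complex.exp (δ * x) * finiteLaplace f 0 δ x‖) :
    EqOn f 0 (Ioo 0 δ) := by
  have hint : IntervalIntegrable f volume 0 δ := hf.intervalIntegrable _ _
  have hnorm (ξ : ℝ) : ‖𝓕 ((Ioc 0 δ).indicator f) ξ‖ = ‖finiteLaplace f 0 δ 0‖ := by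
    have hconst := congrArg norm
      (exp_mul_finiteLaplace_eq_of_isBoundedUnder hδ hint hbdd (2 * π * ξ * Complex.I) 0)
    simpa [fourier_indicator_Ioc hδ, Complex.norm_exp] using hconst
  have hfourier : 𝓕 ((Ioc 0 δ).indicator f) = 0 := by
    have hlim := (Real.zero_at_infty_fourier ((Ioc 0 δ).indicator f)).norm
    simp only [hnorm, norm_zero] at hlim
    exact funext fun ξ => norm_eq_zero.1 ((hnorm ξ).trans (tendsto_const_nhds_iff.1 hlim))
  intro x hx
  have hcont : ContinuousAt ((Ioc 0 δ).indicator f) x :=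
    hf.continuousAt.congr <| (eqOn_indicator.symm).eventuallyEq_of_mem (Ioc_mem_nhds hx.1 hx.2)
  have hinv := ((integrable_indicator_iff measurableSet_Ioc).2 hint.1).fourierInv_fourier_eq
    (by rw [hfourier]; exact integrable_zero _ _ _) hcont
  rw [hfourier, indicator_of_mem (Ioo_subset_Ioc_self hx)] at hinv
  rw [← hinv]
  simp [fourierInv_eq]

theorem eqOn_zero_of_norm_finiteLaplace_le {f : ℝ → ℂ} (hf : Continuous f) {A δ T : ℝ}
    (hδ : 0 ≤ δ) (hδT : δ ≤ T)
    (hdecay : ∀ᶠ x : ℝ in atTop, ‖finiteLaplace f 0 T x‖ ≤ A * exp (-(δ * x))) :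
    EqOn f 0 (Ioo 0 δ) := by
  refine eqOn_zero_of_isBoundedUnder_exp_mul_finiteLaplace hf hδ
    ⟨A + ∫ s in δ..T, ‖f s‖, eventually_map.2 ?_⟩
  filter_upwards [hdecay, eventually_ge_atTop 0] with x hdecay_x hx
  have hhead : finiteLaplace f 0 δ x = finiteLaplace f 0 T x - finiteLaplace f δ T x :=
    eq_sub_of_add_eq <| finiteLaplace_add_adjacent (hf.intervalIntegrable _ _)
      (hf.intervalIntegrable _ _) _
  have htail : ‖finiteLaplace f δ T x‖ ≤ exp (-(δ * x)) * ∫ s in δ..T, ‖f s‖ := by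
    simpa only [Complex.ofReal_re, mul_comm x] using
      norm_finiteLaplace_le_of_re_nonneg (z := x) hδT (hf.intervalIntegrable _ _) hx
  calc ‖Complex.exp (δ * x) * finiteLaplace f 0 δ x‖
      = exp (δ * x) * ‖finiteLaplace f 0 T x - finiteLaplace f δ T x‖ := by
        rw [norm_mul, ← Complex.ofReal_mul, Complex.norm_exp_ofReal, hhead]
    _ ≤ exp (δ * x) * (A * exp (-(δ * x)) + exp (-(δ * x)) * ∫ s in δ..T, ‖f s‖) := by
        gcongr
        exact (norm_sub_le _ _).trans (add_le_add hdecay_x htail)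
    _ = A + ∫ s in δ..T, ‖f s‖ := by
        rw [mul_comm A, ← mul_add, ← mul_assoc, ← exp_add, add_neg_cancel, exp_zero, one_mul]

theorem exists_norm_finiteLaplace_le {f : ℝ → ℂ} {T : ℝ} (hT : 0 ≤ T)
    (hf : IntervalIntegrable f volume 0 T) :
    ∃ A : ℝ, 0 < A ∧ ∀ z : ℂ, 0 ≤ z.re → ‖finiteLaplace f 0 T z‖ ≤ A := by
  have hnonneg : 0 ≤ ∫ s in (0 : ℝ)..T, ‖f s‖ :=
    intervalIntegral.integral_nonneg hT fun _ _ => norm_nonneg _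
  refine ⟨(∫ s in (0 : ℝ)..T, ‖f s‖) + 1, by positivity, fun z hz => ?_⟩
  have hle := norm_finiteLaplace_le_of_re_nonneg hT hf hz
  rw [mul_zero, neg_zero, exp_zero, one_mul] at hle
  linarith

theorem exists_norm_finiteLaplace_le_exp_or {f g : ℝ → ℂ} {δ T : ℝ} (hδ : 0 ≤ δ) (hδT : 4 * δ < T)
    (hf : IntervalIntegrable f volume 0 T) (hg : IntervalIntegrable g volume 0 T)
    (hfg : ∀ t ∈ Icc 0 T, ∫ s in (0 : ℝ)..t, f s * g (t - s) = 0) :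
    ∃ A : ℝ, (∀ᶠ x : ℝ in atTop, ‖finiteLaplace f 0 T x‖ ≤ A * exp (-(δ * x))) ∨
      ∀ᶠ x : ℝ in atTop, ‖finiteLaplace g 0 T x‖ ≤ A * exp (-(δ * x)) := by
  have hT : 0 ≤ T := by linarith
  obtain ⟨A, hA, hfA⟩ := exists_norm_finiteLaplace_le hT hf
  obtain ⟨B, hB, hgB⟩ := exists_norm_finiteLaplace_le hT hg
  obtain ⟨C, hC, hfgC⟩ := exists_norm_finiteLaplace_mul_le hT hf hg hfg
  have hnorm {D : ℝ} (hD : 0 < D) (w : ℂ) : ‖w / D‖ = ‖w‖ / D := by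
    rw [norm_div, Complex.norm_of_nonneg hD.le]
  have hdichotomy := eventually_norm_le_exp_or_of_norm_mul_le (C := C / (A * B))
    ((differentiable_finiteLaplace hf).div_const (A : ℂ))
    ((differentiable_finiteLaplace hg).div_const (B : ℂ))
    (fun z hz => by rw [hnorm hA, div_le_one hA]; exact hfA z hz)
    (fun z hz => by rw [hnorm hB, div_le_one hB]; exact hgB z hz)
    (by positivity) hδ hδT fun z hz => by
      rw [div_mul_div_comm, ← Complex.ofReal_mul, hnorm (by positivity), div_mul_eq_mul_div]
      gcongr
      exact hfgC z hz
  simp only [hnorm hA, hnorm hB, div_le_iff₀' hA, div_le_iff₀' hB] at hdichotomy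
  exact hdichotomy.elim (fun h => ⟨A, .inl h⟩) fun h => ⟨B, .inr h⟩

theorem eqOn_zero_or_eqOn_zero_of_integral_mul_eq_zero {f g : ℝ → ℂ} {δ T : ℝ} (hδ : 0 < δ)
    (hδT : 4 * δ < T) (hf : Continuous f) (hg : Continuous g)
    (hfg : ∀ t ∈ Icc 0 T, ∫ s in (0 : ℝ)..t, f s * g (t - s) = 0) :
    EqOn f 0 (Icc 0 δ) ∨ EqOn g 0 (Icc 0 δ) := by
  obtain ⟨A, hdecay⟩ := exists_norm_finiteLaplace_le_exp_or hδ.le hδT (hf.intervalIntegrable _ _)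
    (hg.intervalIntegrable _ _) hfg
  have eqOn_Icc {h : ℝ → ℂ} (hh : Continuous h)
      (hA : ∀ᶠ x : ℝ in atTop, ‖finiteLaplace h 0 T x‖ ≤ A * exp (-(δ * x))) :
      EqOn h 0 (Icc 0 δ) :=
    closure_Ioo hδ.ne ▸ (eqOn_zero_of_norm_finiteLaplace_le hh hδ.le (by linarith) hA).closure hh
      continuous_zero
  exact hdecay.imp (eqOn_Icc hf) (eqOn_Icc hg)

theorem exists_isGreatest_eqOn_zero_Ico {E : Type*} [Zero E] (f : ℝ → E) {T : ℝ} (hT : 0 ≤ T) :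
    ∃ a, IsGreatest {a | a ∈ Icc 0 T ∧ EqOn f 0 (Ico 0 a)} a := by
  set S := {a | a ∈ Icc 0 T ∧ EqOn f 0 (Ico 0 a)}
  have hne : S.Nonempty := ⟨0, left_mem_Icc.2 hT, by simp⟩
  have hbdd : BddAbove S := ⟨T, fun a ha => ha.1.2⟩
  refine ⟨sSup S, ⟨⟨?_, csSup_le hne fun a ha => ha.1.2⟩, fun s hs => ?_⟩,
    fun a ha => le_csSup hbdd ha⟩
  · obtain ⟨a, ha⟩ := hne
    exact ha.1.1.trans (le_csSup hbdd ha)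
  · obtain ⟨a, ha, hsa⟩ := exists_lt_of_lt_csSup hne hs.2
    exact ha.2 ⟨hs.1, hsa⟩

theorem eqOn_zero_Ico_add {E : Type*} [Zero E] {f : ℝ → E} {a δ : ℝ} (hf : EqOn f 0 (Ico 0 a))
    (hfa : EqOn (fun s => f (s + a)) 0 (Icc 0 δ)) : EqOn f 0 (Ico 0 (a + δ)) := by
  intro s hs
  rcases lt_or_ge s a with hsa | has
  · exact hf ⟨hs.1, hsa⟩
  · have hshift : s - a ∈ Icc 0 δ := ⟨sub_nonneg.2 has, by linarith [hs.2]⟩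
    simpa only [sub_add_cancel, Pi.zero_apply] using hfa hshift

theorem integral_mul_shift_eq {A : Type*} [NormedRing A] [NormedSpace ℝ A] {f g : ℝ → A}
    {a b r : ℝ} (ha : 0 ≤ a) (hb : 0 ≤ b) (hr : 0 ≤ r) (hf : EqOn f 0 (Ico 0 a))
    (hg : EqOn g 0 (Ico 0 b)) :
    ∫ s in (0 : ℝ)..r, f (s + a) * g (r - s + b) =
      ∫ s in (0 : ℝ)..(r + (a + b)), f s * g (r + (a + b) - s) := by
  calc ∫ s in (0 : ℝ)..r, f (s + a) * g (r - s + b)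
      = ∫ s in (0 : ℝ)..r, f (s + a) * g (r + (a + b) - (s + a)) := by
        congr! 4
        ring
    _ = ∫ s in a..(r + a), f s * g (r + (a + b) - s) := by
        rw [intervalIntegral.integral_comp_add_right fun s => f s * g (r + (a + b) - s), zero_add]
    _ = ∫ s in (0 : ℝ)..(r + (a + b)), f s * g (r + (a + b) - s) := by
        rw [intervalIntegral.integral_of_le (by linarith),
          intervalIntegral.integral_of_le (by linarith), ← integral_Icc_eq_integral_Ioc,
          ← integral_Icc_eq_integral_Ioc]
        refine (setIntegral_eq_of_subset_of_forall_sdiff_eq_zero measurableSet_Icc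
          (Icc_subset_Icc ha (by linarith)) fun s hs => ?_).symm
        rcases lt_or_ge s a with hsa | has
        · rw [hf ⟨hs.1.1, hsa⟩, Pi.zero_apply, zero_mul]
        · have hrs : r + a < s := not_le.1 fun hsr => hs.2 ⟨has, hsr⟩
          rw [hg ⟨by linarith [hs.1.2], by linarith⟩, Pi.zero_apply, mul_zero]

theorem titchmarsh_convolution_of_continuous {f g : ℝ → ℂ} {T : ℝ} (hT : 0 ≤ T)
    (hf : Continuous f) (hg : Continuous g)
    (hfg : ∀ t ∈ Icc 0 T, ∫ s in (0 : ℝ)..t, f s * g (t - s) = 0) :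
    ∃ a ∈ Icc 0 T, EqOn f 0 (Ico 0 a) ∧ EqOn g 0 (Ico 0 (T - a)) := by
  obtain ⟨a, ⟨ha, hfa⟩, ha_max⟩ := exists_isGreatest_eqOn_zero_Ico f hT
  obtain ⟨b, ⟨hb, hgb⟩, hb_max⟩ := exists_isGreatest_eqOn_zero_Ico g hT
  suffices hTab : T ≤ a + b from ⟨a, ha, hfa, hgb.mono (Ico_subset_Ico_right (by linarith))⟩
  by_contra! hlt
  have hshift : ∀ r ∈ Icc 0 (T - (a + b)), ∫ s in (0 : ℝ)..r, f (s + a) * g (r - s + b) = 0 :=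
    fun r hr => (integral_mul_shift_eq ha.1 hb.1 hr.1 hfa hgb).trans
      (hfg _ ⟨by linarith [hr.1, ha.1, hb.1], by linarith [hr.2]⟩)
  obtain ⟨δ, hδ, hδT⟩ : ∃ δ, 0 < δ ∧ 4 * δ < T - (a + b) :=
    ⟨(T - (a + b)) / 5, by linarith, by linarith⟩
  rcases eqOn_zero_or_eqOn_zero_of_integral_mul_eq_zero (f := fun s => f (s + a))
    (g := fun s => g (s + b)) hδ hδT (by fun_prop) (by fun_prop) hshift with hf_zero | hg_zero
  · have hle : a + δ ≤ a :=
      ha_max ⟨⟨by linarith [ha.1], by linarith [hb.1]⟩, eqOn_zero_Ico_add hfa hf_zero⟩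
    linarith
  · have hle : b + δ ≤ b :=
      hb_max ⟨⟨by linarith [hb.1], by linarith [ha.1]⟩, eqOn_zero_Ico_add hgb hg_zero⟩
    linarith

theorem rclikeMap_mul {𝕜 : Type*} [RCLike 𝕜] (z w : 𝕜) :
    RCLike.map 𝕜 ℂ (z * w) = RCLike.map 𝕜 ℂ z * RCLike.map 𝕜 ℂ w := by
  apply Complex.ext <;> simp

theorem rclikeMap_eq_zero_iff {𝕜 : Type*} [RCLike 𝕜] {z : 𝕜} : RCLike.map 𝕜 ℂ z = 0 ↔ z = 0 := by
  rw [Complex.ext_iff, RCLike.ext_iff (K := 𝕜)]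
  simp

theorem titchmarsh_convolution {𝕜 : Type*} [RCLike 𝕜] {f g : ℝ → 𝕜} {T : ℝ}
    (hT : 0 ≤ T) (hf : ContinuousOn f (Icc 0 T)) (hg : ContinuousOn g (Icc 0 T))
    (hfg : ∀ t ∈ Icc 0 T, ∫ s in (0 : ℝ)..t, f s * g (t - s) = 0) :
    ∃ a ∈ Icc 0 T, EqOn f 0 (Ico 0 a) ∧ EqOn g 0 (Ico 0 (T - a)) := by
  let extend (h : ℝ → 𝕜) : ℝ → ℂ := IccExtend hT ((Icc 0 T).domRestrict (RCLike.map 𝕜 ℂ ∘ h))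
  have extend_eq (h : ℝ → 𝕜) {s : ℝ} (hs : s ∈ Icc 0 T) : extend h s = RCLike.map 𝕜 ℂ (h s) :=
    IccExtend_of_mem hT _ hs
  have continuous_extend {h : ℝ → 𝕜} (hh : ContinuousOn h (Icc 0 T)) : Continuous (extend h) :=
    ((RCLike.map 𝕜 ℂ).continuous.comp_continuousOn hh).domRestrict.Icc_extend'
  have eqOn_zero {h : ℝ → 𝕜} {c : ℝ} (hc : c ≤ T) (hh : EqOn (extend h) 0 (Ico 0 c)) :
      EqOn h 0 (Ico 0 c) := fun s hs =>
    rclikeMap_eq_zero_iff.1 (extend_eq h ⟨hs.1, hs.2.le.trans hc⟩ ▸ hh hs)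
  have hconv : ∀ t ∈ Icc 0 T, ∫ s in (0 : ℝ)..t, extend f s * extend g (t - s) = 0 := by
    intro t ht
    have hst {s : ℝ} (hs : s ∈ uIcc 0 t) : s ∈ Icc 0 T ∧ t - s ∈ Icc 0 T := by
      rw [uIcc_of_le ht.1] at hs
      exact ⟨⟨hs.1, hs.2.trans ht.2⟩, by linarith [hs.2], by linarith [hs.1, ht.2]⟩
    have hint : IntervalIntegrable (fun s => f s * g (t - s)) volume 0 t :=
      ((hf.mono fun s hs => (hst hs).1).mul
        (hg.comp (by fun_prop) fun s hs => (hst hs).2)).intervalIntegrable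
    calc ∫ s in (0 : ℝ)..t, extend f s * extend g (t - s)
        = ∫ s in (0 : ℝ)..t, RCLike.map 𝕜 ℂ (f s * g (t - s)) :=
          intervalIntegral.integral_congr fun s hs => by
            simp only [extend_eq _ (hst hs).1, extend_eq _ (hst hs).2, rclikeMap_mul]
      _ = RCLike.map 𝕜 ℂ (∫ s in (0 : ℝ)..t, f s * g (t - s)) :=
          ContinuousLinearMap.intervalIntegral_comp_comm _ hint
      _ = 0 := by rw [hfg t ht, map_zero]
  obtain ⟨a, ha, hfa, hga⟩ := titchmarsh_convolution_of_continuous hT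
    (continuous_extend hf) (continuous_extend hg) hconv
  exact ⟨a, ha, eqOn_zero ha.2 hfa, eqOn_zero (by linarith [ha.1]) hga⟩

theorem frequently_nhdsGT_ne_zero_of_analyticOnNhd {E : Type*} [NormedAddCommGroup E]
    [NormedSpace ℝ E] {g : ℝ → E} {a x : ℝ} (hg : AnalyticOnNhd ℝ g (Ioi a)) (hx : a < x)
    (hgx : g x ≠ 0) :
    ∃ᶠ y in 𝓝[>] a, g y ≠ 0 := by
  intro hzero
  obtain ⟨y, hy, hay⟩ :=
    ((eventually_eventually_nhdsWithin.2 hzero).and self_mem_nhdsWithin).exists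
  rw [isOpen_Ioi.nhdsWithin_eq hay] at hy
  exact hgx <| hg.eqOn_zero_of_preconnected_of_eventuallyEq_zero isPreconnected_Ioi hay
    (hy.mono fun _ => not_not.1) hx

theorem titchmarsh_uniqueness_general {𝕜 : Type*} [RCLike 𝕜] {f g : ℝ → 𝕜} {T : ℝ} (hT : 0 ≤ T)
    (hf : ContinuousOn f (Icc 0 T)) (hg : ContinuousOn g (Icc 0 T))
    (hfg : ∀ t ∈ Icc 0 T, ∫ s in (0 : ℝ)..t, f s * g (t - s) = 0)
    (hg_ne : ∃ᶠ x in 𝓝[>] 0, g x ≠ 0) : EqOn f 0 (Ico 0 T) := by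
  obtain ⟨a, ha, hfa, hga⟩ := titchmarsh_convolution hT hf hg hfg
  obtain rfl : a = T := by
    refine ha.2.eq_of_not_lt fun haT => hg_ne ?_
    filter_upwards [Ioo_mem_nhdsGT (sub_pos.2 haT)] with x hx
    exact not_not.2 (hga (Ioo_subset_Ico_self hx))
  exact hfa

end

/-- Titchmarsh-type uniqueness: if f, g are continuous on [0,∞), their convolution
vanishes on [0,T], g is real-analytic on (0,∞) and g(t) ≠ 0 for all t > T₁,
then f = 0 a.e. on (0,T). -/
theorem titchmarsh_uniqueness (T T₁ : ℝ) (hT : 0 < T) (hT₁ : 0 < T₁) (f g : ℝ → ℝ)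
    (hf : ContinuousOn f (Set.Ici 0)) (hg : ContinuousOn g (Set.Ici 0))
    (hconv : ∀ t ∈ Set.Icc (0:ℝ) T, (∫ s in (0:ℝ)..t, f s * g (t - s)) = 0)
    (hganal : AnalyticOnNhd ℝ g (Set.Ioi 0))
    (hgne : ∀ t : ℝ, T₁ < t → g t ≠ 0) :
    ∀ᵐ t ∂(volume.restrict (Set.Ioo 0 T)), f t = 0 := by
  have hg_ne := frequently_nhdsGT_ne_zero_of_analyticOnNhd hganal (x := T₁ + 1) (by positivity)
    (hgne _ (lt_add_one T₁))
  exact ae_restrict_of_forall_mem measurableSet_Ioo fun t ht =>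
    titchmarsh_uniqueness_general hT.le (hf.mono Set.Icc_subset_Ici_self)
      (hg.mono Set.Icc_subset_Ici_self) hconv hg_ne (Set.Ioo_subset_Ico_self ht)
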